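/- For all real numbers u ∈ [0,1) and y ≥ 0 with u + y > 0, ∫_u^1 (1-v)^{1/2} (v-u)^{-1/2} (v+y)^{-2} dv = (π/2) (1-u) (1+y)^{-1/2} (u+y)^{-3/2}. -/

import Mathlib

open MeasureTheory Real Set

/-!
The integral is a Beta integral in disguise. The Möbius transformation sending `a, b, c` to
`0, 1, ∞` maps `(a, b)` onto `(0, 1)`, and substituting it into
`B(α, β) = ∫ t in (0, 1), t ^ (α - 1) * (1 - t) ^ (β - 1)` produces the powers of `v - a`, `b - v`
and `v - c`, the last one with exponent `-(α + β)`.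
The exponents `1/2, -1/2, -2` correspond to `α = 1/2`, `β = 3/2`, and `B(1/2, 3/2) = π / 2`.
-/

open ProbabilityTheory (beta)

theorem integral_rpow_mul_one_sub_rpow {α β : ℝ} (hα : 0 < α) (hβ : 0 < β) :
    ∫ t in Ioo (0 : ℝ) 1, t ^ (α - 1) * (1 - t) ^ (β - 1) = beta α β := by
  have hcomplex : Complex.betaIntegral α β =
      ((∫ t in Ioo (0 : ℝ) 1, t ^ (α - 1) * (1 - t) ^ (β - 1) : ℝ) : ℂ) := by
    rw [Complex.betaIntegral, intervalIntegral.integral_of_le zero_le_one,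
      integral_Ioc_eq_integral_Ioo, ← integral_complex_ofReal]
    refine setIntegral_congr_fun measurableSet_Ioo fun t ht ↦ ?_
    push_cast [Complex.ofReal_cpow ht.1.le, Complex.ofReal_cpow (sub_pos.2 ht.2).le]
    rfl
  rw [ProbabilityTheory.beta_eq_betaIntegralReal α β hα hβ, hcomplex, Complex.ofReal_re]

theorem beta_one_half_three_halves : beta (1 / 2) (3 / 2) = π / 2 := by
  have hΓ : Gamma (3 / 2) = 1 / 2 * √π := by
    rw [← Gamma_one_half_eq, ← Gamma_add_one (by norm_num)]
    norm_num
  rw [beta, hΓ, Gamma_one_half_eq, show (1 / 2 + 3 / 2 : ℝ) = 2 by norm_num, Gamma_two, div_one,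
    mul_left_comm, mul_self_sqrt pi_nonneg]
  ring

/-- The Möbius transformation `v ↦ (v, b; a, c)` (a cross-ratio) sending `a, b, c` to `0, 1, ∞`,
used as a change of variables from `(a, b)` to `(0, 1)` when `c < a < b`. At the pole `v = c` its
value is the junk value `0`. -/
noncomputable def crossRatio (a b c v : ℝ) : ℝ :=
  (v - a) * (b - c) / ((b - a) * (v - c))

namespace crossRatio

variable {a b c v : ℝ}

theorem one_sub (hab : a ≠ b) (hv : v ≠ c) :
    1 - crossRatio a b c v = (b - v) * (a - c) / ((b - a) * (v - c)) := by
  have hba : b - a ≠ 0 := sub_ne_zero.2 hab.symm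
  have hvc : v - c ≠ 0 := sub_ne_zero.2 hv
  rw [crossRatio]
  field_simp
  ring

theorem hasDerivAt (hab : a ≠ b) (hv : v ≠ c) :
    HasDerivAt (crossRatio a b c) ((b - c) * (a - c) / ((b - a) * (v - c) ^ 2)) v := by
  have hba : b - a ≠ 0 := sub_ne_zero.2 hab.symm
  have hvc : v - c ≠ 0 := sub_ne_zero.2 hv
  have hquot := (((hasDerivAt_id' v).sub_const a).mul_const (b - c)).div
    (((hasDerivAt_id' v).sub_const c).const_mul (b - a)) (mul_ne_zero hba hvc)
  refine hquot.congr_deriv ?_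
  field_simp
  ring

theorem strictMonoOn (hca : c < a) (hab : a < b) : StrictMonoOn (crossRatio a b c) (Ioi c) := by
  refine strictMonoOn_of_hasDerivWithinAt_pos (convex_Ioi c)
    (fun v hv ↦ (hasDerivAt hab.ne (ne_of_gt hv)).continuousAt.continuousWithinAt)
    (fun v hv ↦ (hasDerivAt hab.ne (ne_of_gt (interior_subset hv))).hasDerivWithinAt)
    fun v hv ↦ ?_
  have hvc : 0 < v - c := sub_pos.2 (interior_subset hv)
  exact div_pos (mul_pos (sub_pos.2 (hca.trans hab)) (sub_pos.2 hca))
    (mul_pos (sub_pos.2 hab) (pow_pos hvc 2))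

theorem image_Ioo (hca : c < a) (hab : a < b) : crossRatio a b c '' Ioo a b = Ioo 0 1 := by
  have hsub : Icc a b ⊆ Ioi c := fun v hv ↦ hca.trans_le hv.1
  have hcont : ContinuousOn (crossRatio a b c) (Icc a b) := fun v hv ↦
    (hasDerivAt hab.ne (hsub hv).ne').continuousAt.continuousWithinAt
  have hzero : crossRatio a b c a = 0 := by simp [crossRatio]
  have hone : crossRatio a b c b = 1 :=
    div_self (mul_ne_zero (sub_ne_zero.2 hab.ne') (sub_ne_zero.2 (hca.trans hab).ne'))
  rw [hcont.image_Ioo_of_strictMonoOn hab.le ((strictMonoOn hca hab).mono hsub), hzero, hone]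

theorem integral_deriv_smul_comp {E : Type*} [NormedAddCommGroup E] [NormedSpace ℝ E]
    (hca : c < a) (hab : a < b) (g : ℝ → E) :
    ∫ v in Ioo a b, ((b - c) * (a - c) / ((b - a) * (v - c) ^ 2)) • g (crossRatio a b c v) =
      ∫ t in Ioo 0 1, g t := by
  have hsub : Ioo a b ⊆ Ioi c := fun v hv ↦ hca.trans hv.1
  rw [← image_Ioo hca hab, integral_image_eq_integral_deriv_smul_of_monotoneOn measurableSet_Ioo
    (fun v hv ↦ (hasDerivAt hab.ne (hsub hv).ne').hasDerivWithinAt)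
    ((strictMonoOn hca hab).monotoneOn.mono hsub)]

theorem deriv_mul_rpow_mul_one_sub_rpow (α β : ℝ) (hca : c < a) (hv : v ∈ Ioo a b) :
    (b - c) * (a - c) / ((b - a) * (v - c) ^ 2) *
        (crossRatio a b c v ^ (α - 1) * (1 - crossRatio a b c v) ^ (β - 1)) =
      (b - a) ^ (1 - α - β) * (b - c) ^ α * (a - c) ^ β *
        ((b - v) ^ (β - 1) * (v - a) ^ (α - 1) * (v - c) ^ (-(α + β))) := by
  have hab : a < b := hv.1.trans hv.2
  have hac : 0 < a - c := sub_pos.2 hca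
  have hba : 0 < b - a := sub_pos.2 hab
  have hbc : 0 < b - c := sub_pos.2 (hca.trans hab)
  have hva : 0 < v - a := sub_pos.2 hv.1
  have hbv : 0 < b - v := sub_pos.2 hv.2
  have hvc : 0 < v - c := sub_pos.2 (hca.trans hv.1)
  rw [one_sub hab.ne (hca.trans hv.1).ne', crossRatio, div_rpow (by positivity) (by positivity),
    div_rpow (by positivity) (by positivity), mul_rpow hva.le hbc.le, mul_rpow hbv.le hac.le,
    mul_rpow hba.le hvc.le, mul_rpow hba.le hvc.le, rpow_neg hvc.le, rpow_add hvc,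
    rpow_sub hba (1 - α), rpow_sub hba 1, rpow_one]
  simp only [rpow_sub_one hac.ne', rpow_sub_one hba.ne', rpow_sub_one hbc.ne', rpow_sub_one hvc.ne']
  field_simp

end crossRatio

theorem stmt_12_general {a b c α β : ℝ} (hca : c < a) (hab : a < b) (hα : 0 < α) (hβ : 0 < β) :
    ∫ v in Ioo a b, (b - v) ^ (β - 1) * (v - a) ^ (α - 1) * (v - c) ^ (-(α + β)) =
      beta α β * (b - a) ^ (α + β - 1) * (b - c) ^ (-α) * (a - c) ^ (-β) := by
  have hac : 0 < a - c := sub_pos.2 hca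
  have hba : 0 < b - a := sub_pos.2 hab
  have hbc : 0 < b - c := sub_pos.2 (hca.trans hab)
  have hbeta := crossRatio.integral_deriv_smul_comp hca hab
    fun t : ℝ ↦ t ^ (α - 1) * (1 - t) ^ (β - 1)
  simp only [smul_eq_mul] at hbeta
  rw [integral_rpow_mul_one_sub_rpow hα hβ, setIntegral_congr_fun measurableSet_Ioo fun v hv ↦
    crossRatio.deriv_mul_rpow_mul_one_sub_rpow α β hca hv, integral_const_mul] at hbeta
  rw [← hbeta, rpow_neg hbc.le, rpow_neg hac.le, show α + β - 1 = -(1 - α - β) by ring,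
    rpow_neg hba.le]
  field_simp

theorem stmt_12 (u y : ℝ) (hu : u ∈ Ico (0:ℝ) 1) (hy : 0 ≤ y) (huy : 0 < u + y) :
    (∫ v in Ioo u 1,
        (1 - v) ^ ((1:ℝ)/2) * (v - u) ^ (-(1:ℝ)/2) * (v + y) ^ (-(2:ℝ)))
      = (Real.pi / 2) * (1 - u) * (1 + y) ^ (-(1:ℝ)/2) * (u + y) ^ (-(3:ℝ)/2) := by
  convert stmt_12_general (c := -y) (α := 1 / 2) (β := 3 / 2) (by linarith) hu.2 (by norm_num)
    (by norm_num) using 4 <;> norm_num [beta_one_half_three_halves]
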